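/- Let p be a selective ultrafilter on ω. Then 𝓖^p is a cancellative subsemigroup of the semigroup of ultrafilters on ω: for any u, v, w ∈ 𝓖^p, u + w = v + w implies u = v, and u + v = u + w implies v = w. -/

import Mathlib

open Filter

attribute [local instance] Ultrafilter.add Ultrafilter.addSemigroup

/-- `sumPow u n` is the `n`-fold sum `u + ⋯ + u` of the ultrafilter `u`, for `n ≥ 1`
(with junk value `u` at `n = 0`). -/
def sumPow (u : Ultrafilter ℕ) : ℕ → Ultrafilter ℕ
  | 0 => u
  | 1 => u
  | n + 2 => sumPow u (n + 1) + u

/-- The `u`-limit of a sequence of ultrafilters: `A ∈ ulim u v ↔ {n | A ∈ v n} ∈ u`. -/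
def ulim {α : Type*} (u : Ultrafilter ℕ) (v : ℕ → Ultrafilter α) : Ultrafilter α := u.bind v

/-- `InG p` is the smallest family of ultrafilters on `ℕ` containing all principal ultrafilters
and closed under `p`-limits. -/
inductive InG (p : Ultrafilter ℕ) : Ultrafilter ℕ → Prop
  | principal (n : ℕ) : InG p (pure n)
  | lim (v : ℕ → Ultrafilter ℕ) : (∀ n, InG p (v n)) → InG p (ulim p v)

/-- A selective ultrafilter: nonprincipal, and every `f : ℕ → ℕ` is constant or injective on
some set of the ultrafilter. -/
def IsSelective (p : Ultrafilter ℕ) : Prop :=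
  (∀ n : ℕ, p ≠ pure n) ∧
    ∀ f : ℕ → ℕ, ∃ A ∈ p, (∃ c, ∀ a ∈ A, f a = c) ∨ Set.InjOn f A

theorem mem_ulim {α : Type*} (u : Ultrafilter ℕ) (v : ℕ → Ultrafilter α) (A : Set α) :
    A ∈ ulim u v ↔ ∀ᶠ n in (u : Filter ℕ), A ∈ v n := Iff.rfl

theorem mem_addU (u v : Ultrafilter ℕ) (A : Set ℕ) :
    A ∈ u + v ↔ ∀ᶠ n in (u : Filter ℕ), ∀ᶠ m in (v : Filter ℕ), n + m ∈ A := Iff.rfl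

theorem ulim_congr {α : Type*} {p : Ultrafilter ℕ} {x y : ℕ → Ultrafilter α}
    (h : ∀ᶠ k in (p : Filter ℕ), x k = y k) : ulim p x = ulim p y := by
  ext A
  rw [mem_ulim, mem_ulim]
  constructor
  · intro h'
    filter_upwards [h, h'] with k a b
    rwa [← a]
  · intro h'
    filter_upwards [h, h'] with k a b
    rwa [a]

theorem ulim_const {α : Type*} (p : Ultrafilter ℕ) (y : Ultrafilter α) :
    ulim p (fun _ => y) = y := by
  ext A
  rw [mem_ulim]
  simp

theorem ulim_pure (p : Ultrafilter ℕ) : ulim p pure = p := by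
  ext A
  rw [mem_ulim]
  exact Iff.rfl

theorem map_ulim {α β : Type*} (p : Ultrafilter ℕ) (f : α → β) (x : ℕ → Ultrafilter α) :
    (ulim p x).map f = ulim p (fun k => (x k).map f) := by
  ext A
  exact Iff.rfl

theorem ulim_add (p : Ultrafilter ℕ) (x : ℕ → Ultrafilter ℕ) (w : Ultrafilter ℕ) :
    ulim p x + w = ulim p (fun k => x k + w) := by
  ext A
  exact Iff.rfl

theorem pure_addU (n : ℕ) (w : Ultrafilter ℕ) : pure n + w = w.map (fun m => n + m) := by
  ext A
  exact Iff.rfl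

theorem addU_pure (n : ℕ) (w : Ultrafilter ℕ) : w + pure n = w.map (fun m => m + n) := by
  ext A
  exact Iff.rfl

theorem map_injU {α β : Type*} {f : α → β} (hf : Function.Injective f) {u v : Ultrafilter α}
    (h : u.map f = v.map f) : u = v := by
  ext A
  have h1 : ∀ z : Ultrafilter α, f '' A ∈ z.map f ↔ A ∈ z := by
    intro z
    rw [Ultrafilter.mem_map, Set.preimage_image_eq A hf]
  rw [← h1, h, h1]

theorem exists_sepU {α : Type*} {u v : Ultrafilter α} (h : u ≠ v) : ∃ A, A ∈ u ∧ A ∉ v := by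
  by_contra! hc
  have h1 : (v : Filter α) ≤ u := hc
  exact h (Ultrafilter.coe_le_coe.1 h1).symm

theorem pure_inj_sub {n m : ℕ} {w : Ultrafilter ℕ} (h : pure n + w = pure m + w) : n = m := by
  have hr : ∃ r : Fin (n + m + 1), w.map (fun k => (Fin.ofNat (n + m + 1) k)) = pure r := by
    obtain ⟨r, hr⟩ := Ultrafilter.eq_pure_of_finite (w.map (fun k => (Fin.ofNat (n + m + 1) k)))
    exact ⟨r, hr⟩
  obtain ⟨r, hr⟩ := hr
  have hr1 : ∀ᶠ k in (w : Filter ℕ), Fin.ofNat (n + m + 1) k = r := by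
    have : ({r} : Set _) ∈ w.map (fun k => (Fin.ofNat (n + m + 1) k)) := by
      rw [hr]; exact Set.mem_singleton r
    exact this
  have key : ∀ j : ℕ, {a : ℕ | a ≡ j + r [MOD (n + m + 1)]} ∈ pure j + w := by
    intro j
    show ∀ᶠ k in (w : Filter ℕ), j + k ≡ j + r [MOD (n + m + 1)]
    filter_upwards [hr1] with k hk
    apply Nat.ModEq.add_left
    rw [← hk]
    simp [Nat.ModEq, Fin.ofNat]
  have h1 := key n
  have h2 := key m
  rw [← h] at h2
  obtain ⟨a, ha1, ha2⟩ := Ultrafilter.nonempty_of_mem (Filter.inter_mem h1 h2)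
  have h3 : n + r ≡ m + r [MOD (n + m + 1)] := (ha1 : _).symm.trans ha2
  have h4 := Nat.ModEq.add_right_cancel' _ h3
  have := Nat.ModEq.eq_of_lt_of_lt h4 (by omega) (by omega)
  exact this

/-- injective on a set of `p` -/
def PInj {α : Type*} (p : Ultrafilter ℕ) (x : ℕ → α) : Prop := ∃ A ∈ p, Set.InjOn x A

theorem inj_or_const {α : Type*} {p : Ultrafilter ℕ} (hp : IsSelective p) (x : ℕ → α) :
    PInj p x ∨ ∃ k, ∀ᶠ j in (p : Filter ℕ), x j = x k := by
  classical
  have hex : ∀ k, ∃ j, x j = x k := fun k => ⟨k, rfl⟩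
  obtain ⟨A, hA, h⟩ := hp.2 (fun k => Nat.find (hex k))
  have hs : ∀ k, x (Nat.find (hex k)) = x k := fun k => Nat.find_spec (hex k)
  rcases h with ⟨c, hc⟩ | h
  · right
    refine ⟨c, ?_⟩
    filter_upwards [hA] with a ha
    rw [← hc a ha, hs]
  · left
    refine ⟨A, hA, ?_⟩
    intro a ha b hb hab
    apply h ha hb
    show Nat.find (hex a) = Nat.find (hex b)
    simp only [hab]

theorem nonprin {u : Ultrafilter ℕ} (h : ∀ n, u ≠ pure n) (n : ℕ) :
    ∀ᶠ k in (u : Filter ℕ), n < k := by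
  by_contra hc
  have h1 : {k | ¬ n < k} ∈ u := Ultrafilter.eventually_not.2 hc
  have hf : {k | ¬ n < k}.Finite := (Set.finite_Iic n).subset (fun k hk => by simpa using hk)
  obtain ⟨a, _, ha⟩ := Ultrafilter.eq_pure_of_finite_mem hf h1
  exact h a ha

theorem nonprin_finite {u : Ultrafilter ℕ} (h : ∀ n, u ≠ pure n) {s : Set ℕ} (hs : s.Finite) :
    s ∉ u := by
  intro h1
  obtain ⟨a, _, ha⟩ := Ultrafilter.eq_pure_of_finite_mem hs h1
  exact h a ha

theorem ppoint {p : Ultrafilter ℕ} (hp : IsSelective p) (S : ℕ → Set ℕ) (hS : ∀ n, S n ∈ p) :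
    ∃ A ∈ p, ∀ n, (A \ S n).Finite := by
  classical
  have hex : ∀ m, ∃ n, m ∉ S n ∨ m ≤ n := fun m => ⟨m, Or.inr le_rfl⟩
  obtain ⟨A, hA, h⟩ := hp.2 (fun m => Nat.find (hex m))
  rcases h with ⟨c, hc⟩ | h
  · exfalso
    have h1 : ∀ᶠ m in (p : Filter ℕ), False := by
      filter_upwards [hA, hS c, nonprin hp.1 c] with m hm hm1 hm2
      have h3 := Nat.find_spec (hex m)
      have h4 : Nat.find (hex m) = c := hc m hm
      rw [h4] at h3
      rcases h3 with h3 | h3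
      · exact h3 hm1
      · omega
    exact p.neBot.ne (Filter.eventually_false_iff_eq_bot.1 h1)
  · refine ⟨A, hA, fun n => ?_⟩
    apply Set.Finite.of_finite_image (f := fun m => Nat.find (hex m))
    · apply (Set.finite_Iic n).subset
      rintro _ ⟨m, hm, rfl⟩
      exact Nat.find_min' (hex m) (Or.inl hm.2)
    · exact h.mono Set.sdiff_subset

theorem discrete {α : Type*} {p : Ultrafilter ℕ} (hp : IsSelective p) {x : ℕ → Ultrafilter α}
    (hx : PInj p x) : ∃ f : α → ℕ, ∀ᶠ k in (p : Filter ℕ), (x k).map f = pure k := by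
  classical
  obtain ⟨A, hA, hinj⟩ := hx
  -- separate from the limit
  have h1 : ∀ k, ∃ U : Set α, (x k ≠ ulim p x → U ∈ x k ∧ U ∉ ulim p x) := by
    intro k
    by_cases hk : x k = ulim p x
    · exact ⟨∅, fun h => (h hk).elim⟩
    · obtain ⟨U, hU⟩ := exists_sepU hk
      exact ⟨U, fun _ => hU⟩
  choose U hU using h1
  obtain ⟨B, hB, hBfin⟩ := ppoint hp (fun k => {j | x k ≠ ulim p x → U k ∉ x j}) (by
    intro k
    by_cases hk : x k = ulim p x
    · exact Filter.Eventually.of_forall (fun j h => (h hk).elim)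
    · have h2 := (hU k hk).2
      rw [mem_ulim] at h2
      have h3 := Ultrafilter.eventually_not.2 h2
      show ∀ᶠ j in (p : Filter ℕ), (x k ≠ ulim p x → U k ∉ x j)
      filter_upwards [h3] with j hj _ using hj)
  have hne : ∀ᶠ k in (p : Filter ℕ), x k ≠ ulim p x := by
    by_contra hc
    have h2 : ∀ᶠ k in (p : Filter ℕ), ¬ (x k ≠ ulim p x) := Ultrafilter.eventually_not.2 hc
    obtain ⟨a, ha, ha'⟩ := (h2.and hA).exists
    obtain ⟨b, ⟨hb, hb'⟩, hab⟩ := ((h2.and hA).and (nonprin hp.1 a)).exists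
    have := hinj ha' hb' ((not_not.1 ha).trans (not_not.1 hb).symm)
    omega
  let C : Set ℕ := {k | k ∈ A ∧ k ∈ B ∧ x k ≠ ulim p x}
  have hC : C ∈ p := by
    show ∀ᶠ k in (p : Filter ℕ), k ∈ C
    filter_upwards [hA, hB, hne] with k a b c using ⟨a, b, c⟩
  have h2 : ∀ k, ∃ V : Set α, k ∈ C → V ∈ x k ∧ ∀ j ∈ C, j ≠ k → V ∉ x j := by
    intro k
    by_cases hk : k ∈ C
    swap
    · exact ⟨∅, fun h => (hk h).elim⟩
    have hsep : ∀ j, ∃ W : Set α, W ∈ x k ∧ (j ∈ C → j ≠ k → W ∉ x j) := by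
      intro j
      by_cases hj : j ∈ C ∧ j ≠ k
      · have : x k ≠ x j := fun he => hj.2 (hinj hj.1.1 hk.1 he.symm)
        obtain ⟨W, hW1, hW2⟩ := exists_sepU this
        exact ⟨W, hW1, fun _ _ => hW2⟩
      · exact ⟨Set.univ, Filter.univ_mem, fun a b => (hj ⟨a, b⟩).elim⟩
    choose W hW1 hW2 using hsep
    have hfin := hBfin k
    refine ⟨U k ∩ ⋂ j ∈ hfin.toFinset, W j, fun _ => ⟨?_, ?_⟩⟩
    · refine Filter.inter_mem (hU k hk.2.2).1 ?_
      exact (Filter.biInter_finset_mem _).2 (fun j _ => hW1 j)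
    · intro j hj hjk hmem
      by_cases hjs : j ∈ hfin.toFinset
      · apply hW2 j hj hjk
        refine Filter.mem_of_superset hmem ?_
        intro a ha
        exact (Set.mem_iInter₂.1 ha.2) j hjs
      · rw [Set.Finite.mem_toFinset] at hjs
        have : j ∈ {j | x k ≠ ulim p x → U k ∉ x j} := by
          by_contra hn
          exact hjs ⟨hj.2.1, hn⟩
        exact this hk.2.2 (Filter.mem_of_superset hmem Set.inter_subset_left)
  choose V hV using h2
  have hdec : ∀ a : α, ∃ n : ℕ, (∃ k, k ∈ C ∧ a ∈ V k) → (n ∈ C ∧ a ∈ V n ∧ ∀ j < n, j ∈ C → a ∉ V j) := by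
    intro a
    by_cases h : ∃ k, k ∈ C ∧ a ∈ V k
    · exact ⟨Nat.find h, fun _ => ⟨(Nat.find_spec h).1, (Nat.find_spec h).2,
        fun j hj hjC hja => Nat.find_min h hj ⟨hjC, hja⟩⟩⟩
    · exact ⟨0, fun h' => (h h').elim⟩
  choose f hf using hdec
  refine ⟨f, ?_⟩
  filter_upwards [hC] with k hk
  have hmem : ∀ᶠ a in (x k : Filter α), f a = k := by
    have e1 : ∀ᶠ a in (x k : Filter α), a ∈ V k := (hV k hk).1
    have e2 : ∀ᶠ a in (x k : Filter α), ∀ j ∈ Finset.range k, j ∈ C → a ∉ V j := by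
      rw [Filter.eventually_all_finset]
      intro j hj
      by_cases hjC : j ∈ C
      · have : V j ∉ x k := (hV j hjC).2 k hk (by have := Finset.mem_range.1 hj; omega)
        have h3 : ∀ᶠ a in (x k : Filter α), ¬ a ∈ V j := Ultrafilter.eventually_not.2 this
        filter_upwards [h3] with a ha _ using ha
      · filter_upwards with a h using (hjC h).elim
    filter_upwards [e1, e2] with a ha1 ha2
    obtain ⟨g1, g2, g3⟩ := hf a ⟨k, hk, ha1⟩
    rcases lt_trichotomy (f a) k with h | h | h
    · exact (ha2 _ (Finset.mem_range.2 h) g1 g2).elim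
    · exact h
    · exact (g3 k h hk ha1).elim
  have h5 : ({k} : Set ℕ) ∈ (x k).map f := hmem
  obtain ⟨a, ha, ha'⟩ := Ultrafilter.eq_pure_of_finite_mem (Set.finite_singleton k) h5
  rw [ha', Set.mem_singleton_iff.1 ha]

theorem map_lt_false {p : Ultrafilter ℕ} {c : ℕ → ℕ} (h : p.map c = p)
    (hlt : ∀ᶠ n in (p : Filter ℕ), c n < n) : False := by
  classical
  have hL : ∃ L : ℕ → Prop, ∀ n, c n < n → (L n ↔ ¬ L (c n)) := by
    let c' : ℕ → ℕ := fun n => if c n < n then c n else n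
    have : ∀ N : ℕ, ∃ L : ℕ → Prop, ∀ n, L n = (if h : c n < n then ¬ L (c n) else True) := by
      intro _
      refine ⟨fun n => (WellFounded.fix (C := fun _ => Prop) Nat.lt_wfRel.wf
        (fun n ih => if h : c n < n then ¬ ih (c n) h else True) n), ?_⟩
      intro n
      simp only []
      rw [WellFounded.fix_eq]
    obtain ⟨L, hL⟩ := this 0
    refine ⟨L, fun n hn => ?_⟩
    rw [hL n]
    simp [hn]
  obtain ⟨L, hL⟩ := hL
  have h1 : {n | L n} ∈ p ↔ {n | L (c n)} ∈ p := by
    conv_lhs => rw [← h]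
    exact Iff.rfl
  have h2 : {n | L (c n)} ∈ p ↔ {n | ¬ L n} ∈ p := by
    constructor
    · intro h'
      show ∀ᶠ n in (p : Filter ℕ), ¬ L n
      filter_upwards [h', hlt] with n a b
      rw [hL n b]; exact not_not.2 a
    · intro h'
      show ∀ᶠ n in (p : Filter ℕ), L (c n)
      filter_upwards [h', hlt] with n a b
      have a' : ¬ L n := a
      rw [hL n b] at a'; exact not_not.1 a'
  have h3 : {n | ¬ L n} ∈ p ↔ ¬ {n | L n} ∈ p := Ultrafilter.eventually_not
  tauto

theorem map_id {p : Ultrafilter ℕ} (hp : IsSelective p) {c : ℕ → ℕ} (h : p.map c = p) :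
    ∀ᶠ n in (p : Filter ℕ), c n = n := by
  classical
  by_contra hc
  have hc1 : ∀ᶠ n in (p : Filter ℕ), ¬ c n = n := Ultrafilter.eventually_not.2 hc
  by_cases hlt : ∀ᶠ n in (p : Filter ℕ), c n < n
  · exact map_lt_false h hlt
  have hgt : ∀ᶠ n in (p : Filter ℕ), n < c n := by
    filter_upwards [hc1, Ultrafilter.eventually_not.2 hlt] with n a b
    omega
  obtain ⟨A, hA, hA'⟩ := hp.2 c
  rcases hA' with ⟨d, hd⟩ | hinj
  · have : {d} ∈ p.map c := by
      show ∀ᶠ n in (p : Filter ℕ), c n = d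
      filter_upwards [hA] with a ha using hd a ha
    rw [h] at this
    exact nonprin_finite hp.1 (Set.finite_singleton d) this
  · have hd : ∀ a ∈ A, Function.invFunOn c A (c a) = a :=
      fun a ha => hinj.leftInvOn_invFunOn ha
    have hm : p.map (Function.invFunOn c A) = p := by
      conv_lhs => rw [← h]
      ext S
      show (∀ᶠ n in (p : Filter ℕ), Function.invFunOn c A (c n) ∈ S) ↔ ∀ᶠ n in (p : Filter ℕ), n ∈ S
      apply Filter.eventually_congr
      filter_upwards [hA] with a ha
      rw [hd a ha]
    apply map_lt_false hm
    rw [← h]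
    show ∀ᶠ n in (p : Filter ℕ), Function.invFunOn c A (c n) < c n
    filter_upwards [hA, hgt] with a ha hg
    rw [hd a ha]; exact hg

theorem lim_eq_self {p : Ultrafilter ℕ} (hp : IsSelective p) {r : ℕ → Ultrafilter ℕ}
    (h : ulim p r = p) :
    (∀ᶠ k in (p : Filter ℕ), r k = p) ∨ (∀ᶠ k in (p : Filter ℕ), r k = pure k) := by
  classical
  by_contra hc
  rw [not_or] at hc
  obtain ⟨h1, h2⟩ := hc
  have h1' : ∀ᶠ k in (p : Filter ℕ), ¬ r k = p := Ultrafilter.eventually_not.2 h1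
  by_cases h3 : ∀ᶠ k in (p : Filter ℕ), ∃ c, r k = pure c
  · have : ∃ c : ℕ → ℕ, ∀ᶠ k in (p : Filter ℕ), r k = pure (c k) := by
      have : ∀ k, ∃ c, (∃ c, r k = pure c) → r k = pure c := by
        intro k
        by_cases hk : ∃ c, r k = pure c
        · obtain ⟨c, hc⟩ := hk
          exact ⟨c, fun _ => hc⟩
        · exact ⟨0, fun h => (hk h).elim⟩
      choose c hc using this
      exact ⟨c, h3.mono hc⟩
    obtain ⟨c, hc⟩ := this
    have hm : p.map c = p := by
      conv_rhs => rw [← h, ulim_congr hc]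
      ext S
      exact Iff.rfl
    apply h2
    filter_upwards [hc, map_id hp hm] with k a b
    rw [a, b]
  · have h3' := Ultrafilter.eventually_not.2 h3
    have hS : ∀ k, ∃ S : Set ℕ, S ∈ p ∧ (r k ≠ p → S ∉ r k) := by
      intro k
      by_cases hk : r k = p
      · exact ⟨Set.univ, Filter.univ_mem, fun h => (h hk).elim⟩
      · obtain ⟨S, hS1, hS2⟩ := exists_sepU (Ne.symm hk)
        exact ⟨S, hS1, fun _ => hS2⟩
    choose S hS1 hS2 using hS
    obtain ⟨A, hA, hfin⟩ := ppoint hp S hS1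
    rw [← h, mem_ulim] at hA
    obtain ⟨k, hk1, hk2, hk3⟩ := (hA.and (h1'.and h3')).exists
    have hn : ∀ n, r k ≠ pure n := fun n hn => hk3 ⟨n, hn⟩
    have hd := nonprin_finite hn (hfin k)
    have hd' : (A \ S k)ᶜ ∈ r k := Ultrafilter.compl_mem_iff_notMem.2 hd
    apply hS2 k hk2
    refine Filter.mem_of_superset (Filter.inter_mem hk1 hd') ?_
    rintro a ⟨ha, hb⟩
    by_contra hc
    exact hb ⟨ha, hc⟩

theorem uniq_aux {α : Type*} {p : Ultrafilter ℕ} {x y : ℕ → Ultrafilter α} {f : α → ℕ}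
    (h : ulim p x = ulim p y)
    (hx : ∀ᶠ k in (p : Filter ℕ), (x k).map f = pure k)
    (hy : ∀ᶠ k in (p : Filter ℕ), (y k).map f = pure k) :
    ∀ᶠ k in (p : Filter ℕ), x k = y k := by
  classical
  by_contra hc
  have hc' : ∀ᶠ k in (p : Filter ℕ), ¬ x k = y k := Ultrafilter.eventually_not.2 hc
  have hS : ∀ k, ∃ S : Set α, x k ≠ y k → S ∈ x k ∧ S ∉ y k := by
    intro k
    by_cases hk : x k = y k
    · exact ⟨∅, fun h => (h hk).elim⟩
    · obtain ⟨S, hS⟩ := exists_sepU hk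
      exact ⟨S, fun _ => hS⟩
  choose S hS using hS
  have key : ∀ (z : Ultrafilter α) (k : ℕ), z.map f = pure k →
      ({a | a ∈ S (f a)} ∈ z ↔ S k ∈ z) := by
    intro z k hz
    have : ({k} : Set ℕ) ∈ z.map f := by rw [hz]; exact Set.mem_singleton k
    have hk : ∀ᶠ a in (z : Filter α), f a = k := this
    show (∀ᶠ a in (z : Filter α), a ∈ S (f a)) ↔ ∀ᶠ a in (z : Filter α), a ∈ S k
    apply Filter.eventually_congr
    filter_upwards [hk] with a ha
    rw [ha]
  have e1 : {a | a ∈ S (f a)} ∈ ulim p x := by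
    rw [mem_ulim]
    filter_upwards [hx, hc'] with k a b
    exact (key _ _ a).2 (hS k b).1
  rw [h, mem_ulim] at e1
  obtain ⟨k, a, b, c⟩ := (e1.and (hy.and hc')).exists
  exact (hS k c).2 ((key _ _ b).1 a)

theorem lim_map_self {α : Type*} {p : Ultrafilter ℕ} {x : ℕ → Ultrafilter α} {f : α → ℕ}
    (hx : ∀ᶠ k in (p : Filter ℕ), (x k).map f = pure k) : (ulim p x).map f = p := by
  rw [map_ulim, ulim_congr hx]
  exact ulim_pure p

theorem lt_aux {α : Type*} {p : Ultrafilter ℕ} (hp : IsSelective p) {x : ℕ → Ultrafilter α}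
    {f g : α → ℕ}
    (hx : ∀ᶠ k in (p : Filter ℕ), (x k).map f = pure k)
    (hg : ∀ᶠ k in (p : Filter ℕ), (x k).map g = p) : {a | f a < g a} ∈ ulim p x := by
  rw [mem_ulim]
  filter_upwards [hx, hg] with k h1 h2
  have : ({k} : Set ℕ) ∈ (x k).map f := by rw [h1]; exact Set.mem_singleton k
  have e1 : ∀ᶠ a in (x k : Filter α), f a = k := this
  have : {j | k < j} ∈ (x k).map g := by rw [h2]; exact nonprin hp.1 k
  have e2 : ∀ᶠ a in (x k : Filter α), k < g a := this
  show ∀ᶠ a in (x k : Filter α), f a < g a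
  filter_upwards [e1, e2] with a a1 a2
  rw [a1]; exact a2

theorem uniq {α : Type*} {p : Ultrafilter ℕ} (hp : IsSelective p) {x y : ℕ → Ultrafilter α}
    (hx : PInj p x) (hy : PInj p y) (h : ulim p x = ulim p y) :
    ∀ᶠ k in (p : Filter ℕ), x k = y k := by
  obtain ⟨f, hf⟩ := discrete hp hx
  obtain ⟨g, hg⟩ := discrete hp hy
  have h1 : ulim p (fun k => (y k).map f) = p := by
    rw [← map_ulim, ← h]; exact lim_map_self hf
  have h2 : ulim p (fun k => (x k).map g) = p := by
    rw [← map_ulim, h]; exact lim_map_self hg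
  rcases lim_eq_self hp h1 with h1 | h1
  swap
  · exact uniq_aux h hf h1
  rcases lim_eq_self hp h2 with h2 | h2
  swap
  · exact uniq_aux h h2 hg
  exfalso
  have a1 := lt_aux hp hf h2
  have a2 := lt_aux hp hg h1
  rw [← h] at a2
  obtain ⟨a, b, c⟩ := Ultrafilter.nonempty_of_mem (Filter.inter_mem a1 a2)
  have b' : f a < g a := b
  have c' : g a < f a := c
  omega

theorem lim_ne_pure {p : Ultrafilter ℕ} (hp : IsSelective p) {x : ℕ → Ultrafilter ℕ}
    (hx : PInj p x) (n : ℕ) : ulim p x ≠ pure n := by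
  intro h
  obtain ⟨f, hf⟩ := discrete hp hx
  have h1 := lim_map_self hf
  rw [h, Ultrafilter.map_pure] at h1
  exact hp.1 _ h1.symm

/-- ranked version of `InG` -/
inductive Gr (p : Ultrafilter ℕ) : Ordinal.{0} → Ultrafilter ℕ → Prop
  | principal (α : Ordinal.{0}) (n : ℕ) : Gr p α (pure n)
  | lim (α : Ordinal.{0}) (β : ℕ → Ordinal.{0}) (v : ℕ → Ultrafilter ℕ) (hβ : ∀ n, β n < α)
      (hv : ∀ n, Gr p (β n) (v n)) : Gr p α (ulim p v)

theorem Gr.mono {p : Ultrafilter ℕ} {α γ : Ordinal.{0}} {u : Ultrafilter ℕ} (h : Gr p α u)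
    (hle : α ≤ γ) : Gr p γ u := by
  cases h with
  | principal _ n => exact Gr.principal _ _
  | lim _ β v hβ hv => exact Gr.lim _ β v (fun n => (hβ n).trans_le hle) hv

theorem Gr.inG {p : Ultrafilter ℕ} {α : Ordinal.{0}} {u : Ultrafilter ℕ} (h : Gr p α u) :
    InG p u := by
  induction h with
  | principal α n => exact InG.principal _
  | lim α β v hβ hv ih => exact InG.lim _ ih

theorem Gr.map {p : Ultrafilter ℕ} {α : Ordinal.{0}} {u : Ultrafilter ℕ} (f : ℕ → ℕ)
    (h : Gr p α u) : Gr p α (u.map f) := by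
  induction h with
  | principal α n => rw [Ultrafilter.map_pure]; exact Gr.principal _ _
  | lim α β v hβ hv ih => rw [map_ulim]; exact Gr.lim _ β _ hβ ih

theorem InG.gr {p : Ultrafilter ℕ} {u : Ultrafilter ℕ} (h : InG p u) : ∃ α, Gr p α u := by
  induction h with
  | principal n => exact ⟨0, Gr.principal _ _⟩
  | lim v hv ih =>
    choose β hβ using ih
    refine ⟨Order.succ (⨆ n, β n), Gr.lim _ β v (fun n => ?_) hβ⟩
    exact Order.lt_succ_of_le (Ordinal.le_iSup β n)

theorem Gr.nf {p : Ultrafilter ℕ} (hp : IsSelective p) (α : Ordinal.{0}) :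
    ∀ u : Ultrafilter ℕ, Gr p α u → (∃ n, u = pure n) ∨
      ∃ (β : ℕ → Ordinal.{0}) (v : ℕ → Ultrafilter ℕ), (∀ n, β n < α) ∧
        (∀ n, Gr p (β n) (v n)) ∧ PInj p v ∧ u = ulim p v := by
  induction α using WellFoundedLT.induction with
  | ind α ih =>
  intro u h
  cases h with
  | principal _ n => exact Or.inl ⟨n, rfl⟩
  | lim _ β v hβ hv =>
    rcases inj_or_const hp v with hi | ⟨k, hk⟩
    · exact Or.inr ⟨β, v, hβ, hv, hi, rfl⟩
    · have e : ulim p v = v k := (ulim_congr hk).trans (ulim_const p (v k))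
      rw [e]
      rcases ih (β k) (hβ k) (v k) (hv k) with h | ⟨γ, z, h1, h2, h3, h4⟩
      · exact Or.inl h
      · exact Or.inr ⟨γ, z, fun n => (h1 n).trans (hβ k), h2, h3, h4⟩

theorem gr_of_add {p : Ultrafilter ℕ} (hp : IsSelective p) {v w : Ultrafilter ℕ} (hv : InG p v) :
    ∀ β : Ordinal.{0}, Gr p β (v + w) → Gr p β w := by
  induction hv with
  | principal n =>
    intro β h
    have h1 := h.map (fun m => m - n)
    rw [pure_addU, Ultrafilter.map_map] at h1
    have : ((fun m => m - n) ∘ fun m => n + m) = id := by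
      funext m; simp
    rw [this, Ultrafilter.map_id] at h1
    exact h1
  | lim v hv ih =>
    intro β h
    rw [ulim_add] at h
    rcases inj_or_const hp (fun k => v k + w) with hi | ⟨k, hk⟩
    · rcases Gr.nf hp β _ h with ⟨n, hn⟩ | ⟨γ, z, h1, h2, h3, h4⟩
      · exact (lim_ne_pure hp hi n hn).elim
      · obtain ⟨k, hk⟩ := (uniq hp hi h3 h4).exists
        refine (ih k (γ k) ?_).mono (h1 k).le
        have hk' : v k + w = z k := hk
        rw [hk']; exact h2 k
    · have e := (ulim_congr hk).trans (ulim_const p (v k + w))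
      rw [e] at h
      exact ih k β h

theorem base_case {p : Ultrafilter ℕ} (hp : IsSelective p) {w : Ultrafilter ℕ} (hw : InG p w)
    {n : ℕ} {v : ℕ → Ultrafilter ℕ} (hv : ∀ k, InG p (v k)) (hvi : PInj p v)
    (hi : PInj p (fun k => v k + w)) : pure n + w ≠ ulim p v + w := by
  intro h
  obtain ⟨α, hα, hmin⟩ := WellFounded.has_min (wellFounded_lt (α := Ordinal.{0}))
    {α | Gr p α w} hw.gr
  rcases Gr.nf hp α w hα with ⟨m, rfl⟩ | ⟨β, z, h1, h2, h3, h4⟩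
  · rw [addU_pure, addU_pure] at h
    have := map_injU (add_left_injective m) h
    exact lim_ne_pure hp hvi n this.symm
  · have e : pure n + w = ulim p (fun k => pure n + z k) := by
      rw [h4, pure_addU, map_ulim]; rfl
    rw [e, ulim_add] at h
    have hzi : PInj p (fun k => pure n + z k) := by
      obtain ⟨A, hA, hA'⟩ := h3
      refine ⟨A, hA, fun a ha b hb hab => hA' ha hb ?_⟩
      simp only [pure_addU] at hab
      exact map_injU (add_right_injective n) hab
    obtain ⟨k, hk⟩ := (uniq hp hzi hi h).exists
    have hk' : pure n + z k = v k + w := hk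
    have g1 : Gr p (β k) (v k + w) := by
      rw [← hk', pure_addU]; exact (h2 k).map _
    exact hmin (β k) (gr_of_add hp (hv k) _ g1) (h1 k)

theorem right_cancel {p : Ultrafilter ℕ} (hp : IsSelective p) {w : Ultrafilter ℕ} (hw : InG p w)
    (α : Ordinal.{0}) : ∀ u v : Ultrafilter ℕ, Gr p α u → Gr p α v → u + w = v + w → u = v := by
  induction α using WellFoundedLT.induction with
  | ind α ih =>
  have ih' : ∀ (β γ : Ordinal.{0}) (u v : Ultrafilter ℕ), β < α → γ < α → Gr p β u → Gr p γ v →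
      u + w = v + w → u = v := fun β γ u v hβ hγ hu hv h =>
    ih (max β γ) (max_lt hβ hγ) u v (hu.mono (le_max_left _ _)) (hv.mono (le_max_right _ _)) h
  have hinj : ∀ (β : ℕ → Ordinal.{0}) (v : ℕ → Ultrafilter ℕ), (∀ n, β n < α) →
      (∀ n, Gr p (β n) (v n)) → PInj p v → PInj p (fun k => v k + w) := by
    rintro β v h1 h2 ⟨A, hA, hA'⟩
    exact ⟨A, hA, fun a ha b hb hab => hA' ha hb (ih' _ _ _ _ (h1 a) (h1 b) (h2 a) (h2 b) hab)⟩
  intro u v hu hv h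
  rcases Gr.nf hp α u hu with ⟨n, rfl⟩ | ⟨β, x, h1, h2, h3, rfl⟩
  · rcases Gr.nf hp α v hv with ⟨m, rfl⟩ | ⟨γ, y, k1, k2, k3, rfl⟩
    · rw [pure_inj_sub h]
    · exact (base_case hp hw (fun k => (k2 k).inG) k3 (hinj γ y k1 k2 k3) h).elim
  · rcases Gr.nf hp α v hv with ⟨m, rfl⟩ | ⟨γ, y, k1, k2, k3, rfl⟩
    · exact (base_case hp hw (fun k => (h2 k).inG) h3 (hinj β x h1 h2 h3) h.symm).elim
    · rw [ulim_add, ulim_add] at h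
      apply ulim_congr
      filter_upwards [uniq hp (hinj β x h1 h2 h3) (hinj γ y k1 k2 k3) h] with k hk
      exact ih' _ _ _ _ (h1 k) (k1 k) (h2 k) (k2 k) hk

theorem right_cancel' {p : Ultrafilter ℕ} (hp : IsSelective p) {u v w : Ultrafilter ℕ}
    (hu : InG p u) (hv : InG p v) (hw : InG p w) (h : u + w = v + w) : u = v := by
  obtain ⟨α, hα⟩ := hu.gr
  obtain ⟨β, hβ⟩ := hv.gr
  exact right_cancel hp hw (max α β) u v (hα.mono (le_max_left _ _)) (hβ.mono (le_max_right _ _)) h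

theorem left_cancel {p : Ultrafilter ℕ} (hp : IsSelective p) {v w : Ultrafilter ℕ}
    (hv : InG p v) (hw : InG p w) {u : Ultrafilter ℕ} (hu : InG p u) (h : u + v = u + w) :
    v = w := by
  induction hu with
  | principal n =>
    rw [pure_addU, pure_addU] at h
    exact map_injU (add_right_injective n) h
  | lim x hx ih =>
    rcases inj_or_const hp x with ⟨A, hA, hA'⟩ | ⟨k, hk⟩
    · have hi : ∀ z, InG p z → PInj p (fun k => x k + z) := fun z hz =>
        ⟨A, hA, fun a ha b hb hab => hA' ha hb (right_cancel' hp (hx a) (hx b) hz hab)⟩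
      rw [ulim_add, ulim_add] at h
      obtain ⟨k, hk⟩ := (uniq hp (hi v hv) (hi w hw) h).exists
      exact ih k hk
    · have e : ulim p x = x k := (ulim_congr hk).trans (ulim_const p (x k))
      rw [e] at h
      exact ih k h

/-- If `p` is selective then `𝓖^p` is a cancellative subsemigroup of `(βℕ, +)`. -/
theorem statement19 (p : Ultrafilter ℕ) (hp : IsSelective p) :
    ∀ u v w : Ultrafilter ℕ, InG p u → InG p v → InG p w →
      (u + w = v + w → u = v) ∧ (u + v = u + w → v = w) := by
  intro u v w hu hv hw
  exact ⟨right_cancel' hp hu hv hw, left_cancel hp hv hw hu⟩
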